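/- Let G be a connected graph with σ_2 ≥ t_{k+1} − 2k + 2 for some positive integer k. Then t_k ≥ t_{k+1} − 1. (Corollary 8) -/

import Mathlib

open SimpleGraph

variable {V : Type*}

/-- A set of vertices is independent in `G`. -/
def IsIndSet (G : SimpleGraph V) (s : Set V) : Prop :=
  ∀ ⦃u⦄, u ∈ s → ∀ ⦃v⦄, v ∈ s → ¬ G.Adj u v

/-- The number of end-vertices (vertices of degree one) of a subgraph `H`. -/
noncomputable def endVertexCount {G : SimpleGraph V} (H : G.Subgraph) : ℕ :=
  {v : V | v ∈ H.verts ∧ (H.neighborSet v).ncard = 1}.ncard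

/-- `H` is a cycle; a single vertex and a single edge are regarded as
simple cycles of orders 1 and 2, respectively. -/
def IsCycleSubgraph {G : SimpleGraph V} (H : G.Subgraph) : Prop :=
  H.Connected ∧ (H.verts.ncard ≤ 2 ∨ ∀ v ∈ H.verts, (H.neighborSet v).ncard = 2)

/-- `H` is a `k`-ended tree in `G`: a tree with at most `k` end-vertices (leaves);
a cycle is regarded as a 1-ended tree. -/
def IsKEndedTree (G : SimpleGraph V) (k : ℕ) (H : G.Subgraph) : Prop :=
  (H.coe.IsTree ∧ endVertexCount H ≤ k) ∨ (1 ≤ k ∧ IsCycleSubgraph H)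

/-- `t k`: the order of a largest `k`-ended tree in `G`. -/
noncomputable def maxKEndedOrder (G : SimpleGraph V) (k : ℕ) : ℕ :=
  sSup {n | ∃ H : G.Subgraph, IsKEndedTree G k H ∧ H.verts.ncard = n}

/-- `σ m`: the minimum degree sum over independent sets of `m` vertices of `G`,
and `+∞` if the independence number of `G` is less than `m`. -/
noncomputable def minDegreeSum (G : SimpleGraph V) [Fintype V] [DecidableRel G.Adj]
    (m : ℕ) : ℕ∞ :=
  ⨅ s ∈ {s : Finset V | s.card = m ∧ IsIndSet G ↑s}, (∑ v ∈ s, G.degree v : ℕ∞)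

section LeafSet

variable {W : Type*} {K T : SimpleGraph W}

/-- The vertices of degree at most one. -/
def leafSet (T : SimpleGraph W) : Set W :=
  {v | (T.neighborSet v).Subsingleton}

/-- `K` has a Hamiltonian cycle or a spanning tree with at most `k` leaves. -/
def HasSpanningKEnded (K : SimpleGraph W) (k : ℕ) : Prop :=
  (∃ T ≤ K, T.IsTree ∧ (leafSet T).ncard ≤ k) ∨
    ∃ a, ∃ c : K.Walk a a, c.IsCycle ∧ ∀ w, w ∈ c.support

/-- Add the edge `ab` and delete the edge `cd`. -/
def swapEdge (T : SimpleGraph W) (a b c d : W) : SimpleGraph W :=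
  (T ⊔ edge a b).deleteEdges {s(c, d)}

lemma eq_of_mem_leafSet {v u w : W} (hv : v ∈ leafSet T) (hu : T.Adj v u) (hw : T.Adj v w) :
    u = w := hv hu hw

lemma notMem_leafSet {v u w : W} (hu : T.Adj v u) (hw : T.Adj v w) (h : u ≠ w) :
    v ∉ leafSet T := fun hv => h (hv hu hw)

lemma mem_leafSet_iff {v : W} :
    v ∈ leafSet T ↔ ∀ u w, T.Adj v u → T.Adj v w → u = w :=
  ⟨fun h _ _ hu hw => h hu hw, fun h _ hu _ hw => h _ _ hu hw⟩

lemma swapEdge_adj {a b c d v w : W} (hab : a ≠ b) :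
    (swapEdge T a b c d).Adj v w ↔
      (T.Adj v w ∨ (v = a ∧ w = b ∨ v = b ∧ w = a)) ∧
        ¬ (v = c ∧ w = d ∨ v = d ∧ w = c) := by
  simp only [swapEdge, deleteEdges_adj, sup_adj, edge_adj, Set.mem_singleton_iff, Sym2.eq_iff]
  grind

lemma swapEdge_le {a b c d : W} (hTK : T ≤ K) (hab : K.Adj a b) : swapEdge T a b c d ≤ K := by
  intro v w h
  rw [swapEdge_adj hab.ne] at h
  rcases h.1 with h | ⟨rfl, rfl⟩ | ⟨rfl, rfl⟩
  · exact hTK h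
  · exact hab
  · exact hab.symm

lemma isTree_swapEdge [Finite W] (hT : T.IsTree) {a b c d : W} (P : T.Walk a b) (hP : P.IsPath)
    (hne : a ≠ b) (hab : ¬ T.Adj a b) (hcd : s(c, d) ∈ P.edges) :
    (swapEdge T a b c d).IsTree := by
  have hadj : (T ⊔ edge a b).Adj b a := by simp [edge_adj, hne.symm]
  have hle : T ≤ T ⊔ edge a b := le_sup_left
  have hcycle : (Walk.cons hadj (P.mapLe hle)).IsCycle := by
    rw [Walk.cons_isCycle_iff]
    refine ⟨hP.mapLe hle, fun h => hab ?_⟩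
    rw [Walk.edges_mapLe_eq_edges] at h
    exact (P.adj_of_mem_edges h).symm
  have hcdT : T.Adj c d := P.adj_of_mem_edges hcd
  rw [isTree_iff_connected_and_card] at hT ⊢
  constructor
  · refine (hT.1.mono hle).connected_delete_edge_of_not_isBridge fun hb => ?_
    refine (isBridge_iff_forall_cycle_notMem (mem_edgeSet _ |>.2 (hle hcdT))).mp hb _ hcycle ?_
    simp [hcd]
  · rw [← hT.2]
    have hset : (swapEdge T a b c d).edgeSet = insert s(a, b) T.edgeSet \ {s(c, d)} := by
      ext e
      simp only [swapEdge, edgeSet_deleteEdges, edgeSet_sup, edgeSet_edge_of_ne hne]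
      simp
    have h1 := Set.ncard_sdiff_singleton_add_one
      (show s(c, d) ∈ insert s(a, b) T.edgeSet from Or.inr hcdT) (Set.toFinite _)
    rw [Set.ncard_insert_of_notMem (by simpa using hab) (Set.toFinite _)] at h1
    rw [hset, Nat.card_coe_set_eq, Nat.card_coe_set_eq]
    omega

/-- A set of vertices closed under adjacency contains everything. -/
lemma mem_of_adj_closed (hT : T.Connected) {S : Set W} {a : W} (ha : a ∈ S)
    (hS : ∀ v ∈ S, ∀ w, T.Adj v w → w ∈ S) (w : W) : w ∈ S := by
  by_contra hw
  obtain ⟨P⟩ := hT a w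
  obtain ⟨d, -, h1, h2⟩ := P.exists_boundary_dart S ha hw
  exact h2 (hS _ h1 _ d.adj)

lemma exists_adj_of_ne (hT : T.Connected) {a b : W} (hab : a ≠ b) : ∃ c, T.Adj a c := by
  obtain ⟨P⟩ := hT a b
  cases P with
  | nil => exact absurd rfl hab
  | cons h _ => exact ⟨_, h⟩

lemma not_adj_of_mem_leafSet (hT : T.Connected) {a b c : W} (ha : a ∈ leafSet T)
    (hb : b ∈ leafSet T) (hca : c ≠ a) (hcb : c ≠ b) : ¬ T.Adj a b := by
  intro h
  have := mem_of_adj_closed hT (S := {a, b}) (a := a) (by simp) (by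
    rintro v (rfl | rfl) w hw
    · exact Or.inr (ha hw h)
    · exact Or.inl (hb hw h.symm)) c
  rcases this with h | h
  · exact hca h
  · exact hcb h

lemma leafSet_swapEdge_subset (hT : T.Connected) {a b c d : W} (hab : a ≠ b)
    (hadj : ¬ T.Adj a b) :
    leafSet (swapEdge T a b c d) ⊆ (leafSet T \ {a, b}) ∪ {c, d} := by
  intro v hv
  by_cases hvc : v = c
  · simp [hvc]
  by_cases hvd : v = d
  · simp [hvd]
  left
  have hmono : ∀ w, T.Adj v w → (swapEdge T a b c d).Adj v w := fun w hw => by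
    rw [swapEdge_adj hab]; grind
  rw [mem_leafSet_iff] at hv
  refine ⟨mem_leafSet_iff.2 fun u w hu hw => hv u w (hmono u hu) (hmono w hw), ?_⟩
  rintro (rfl | rfl)
  · obtain ⟨w, hw⟩ := exists_adj_of_ne hT hab
    have := hv w b (hmono w hw) (by rw [swapEdge_adj hab]; grind)
    exact hadj (this ▸ hw)
  · obtain ⟨w, hw⟩ := exists_adj_of_ne hT hab.symm
    have := hv w a (hmono w hw) (by rw [swapEdge_adj hab]; grind)
    exact hadj (this ▸ hw).symm

/-- Two leaves of a spanning tree that are adjacent in `K` allow saving a leaf. -/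
lemma hasSpanningKEnded_of_adj_leaves [Finite W] (hTK : T ≤ K) (hT : T.IsTree) {k : ℕ}
    (hleaf : (leafSet T).ncard ≤ k + 1) {a b c : W} (ha : a ∈ leafSet T) (hb : b ∈ leafSet T)
    (hca : c ≠ a) (hcb : c ≠ b) (hab : K.Adj a b) : HasSpanningKEnded K k := by
  have hnadj : ¬ T.Adj a b := not_adj_of_mem_leafSet hT.connected ha hb hca hcb
  obtain ⟨P, hP⟩ := hT.connected.exists_isPath a b
  by_cases hall : ∀ w, w ∈ P.support
  · refine Or.inr ⟨b, Walk.cons hab.symm (P.mapLe hTK), ?_, fun w => ?_⟩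
    · rw [Walk.cons_isCycle_iff]
      refine ⟨hP.mapLe hTK, fun h => hnadj ?_⟩
      rw [Walk.edges_mapLe_eq_edges] at h
      exact (P.adj_of_mem_edges h).symm
    · simp [hall w]
  · push Not at hall
    obtain ⟨w, hw⟩ := hall
    obtain ⟨Q⟩ := hT.connected a w
    obtain ⟨⟨⟨s, t⟩, hst⟩, -, hs, ht⟩ := Q.exists_boundary_dart {v | v ∈ P.support} (by simp) hw
    simp only [Set.mem_ofPred_eq] at hs ht hst
    obtain ⟨i, rfl, hi⟩ := Walk.mem_support_iff_exists_getVert.1 hs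
    have hlen : P.length ≠ 0 := fun h => hab.ne (Walk.eq_of_length_eq_zero h)
    have hi0 : i ≠ 0 := by
      rintro rfl
      have h1 := P.adj_getVert_succ (i := 0) (by omega)
      simp only [Walk.getVert_zero] at h1 hst
      exact ht (eq_of_mem_leafSet ha hst h1 ▸ P.getVert_mem_support _)
    have hil : i ≠ P.length := by
      rintro rfl
      have h1 := P.adj_getVert_succ (i := P.length - 1) (by omega)
      rw [Nat.sub_add_cancel (by omega)] at h1
      simp only [Walk.getVert_length] at h1 hst
      exact ht (eq_of_mem_leafSet hb hst h1.symm ▸ P.getVert_mem_support _)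
    have hnext := P.adj_getVert_succ (i := i) (by omega)
    have hprev := P.adj_getVert_succ (i := i - 1) (by omega)
    rw [Nat.sub_add_cancel (by omega)] at hprev
    have hpn : P.getVert (i - 1) ≠ P.getVert (i + 1) := fun h => by
      have := hP.getVert_injOn (by simp; omega) (by simp; omega) h
      omega
    set c' := P.getVert i
    set d := P.getVert (i + 1)
    have htd : t ≠ d := fun h => ht (h ▸ P.getVert_mem_support _)
    have htp : t ≠ P.getVert (i - 1) := fun h => ht (h ▸ P.getVert_mem_support _)
    have hc'a : c' ≠ a := fun h => htd (eq_of_mem_leafSet (h ▸ ha) hst hnext)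
    have hc'b : c' ≠ b := fun h => htd (eq_of_mem_leafSet (h ▸ hb) hst hnext)
    have hedge : s(c', d) ∈ P.edges := by
      rw [← Walk.adj_toSubgraph_iff_mem_edges]
      exact P.toSubgraph_adj_getVert (by omega)
    refine Or.inl ⟨swapEdge T a b c' d, swapEdge_le hTK hab,
      isTree_swapEdge hT P hP hab.ne hnadj hedge, ?_⟩
    have hsub : leafSet (swapEdge T a b c' d) ⊆ insert d (leafSet T \ {a, b}) := by
      intro v hv
      rcases leafSet_swapEdge_subset hT.connected hab.ne hnadj hv with h | rfl | rfl
      · exact Or.inr h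
      · refine absurd hv (notMem_leafSet (u := t) (w := P.getVert (i - 1)) ?_ ?_ htp)
        · rw [swapEdge_adj hab.ne]
          exact ⟨Or.inl hst, by grind⟩
        · rw [swapEdge_adj hab.ne]
          exact ⟨Or.inl hprev.symm, by grind⟩
      · exact Or.inl rfl
    have h1 := Set.ncard_le_ncard hsub (Set.toFinite _)
    have h2 := Set.ncard_insert_le d (leafSet T \ {a, b})
    have h3 := Set.ncard_sdiff_add_ncard_of_subset (s := {a, b}) (t := leafSet T)
      (by rintro v (rfl | rfl) <;> assumption)
    rw [Set.ncard_pair hab.ne] at h3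
    omega


lemma image_leafSet_induce_compl_subset {z z' : W} (hzz' : T.Adj z z') (hz : z ∈ leafSet T) :
    (↑) '' leafSet (T.induce {z}ᶜ) ⊆ insert z' (leafSet T \ {z}) := by
  rintro _ ⟨⟨v, hvz⟩, hv, rfl⟩
  by_cases hvz' : v = z'
  · exact Or.inl hvz'
  have hne : ∀ u, T.Adj v u → u ≠ z := by
    rintro u hu rfl
    exact hvz' (hz hu.symm hzz')
  refine Or.inr ⟨mem_leafSet_iff.2 fun u w hu hw => ?_, hvz⟩
  exact congrArg Subtype.val (mem_leafSet_iff.1 hv ⟨u, hne u hu⟩ ⟨w, hne w hw⟩ hu hw)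

lemma isTree_induce_compl [Finite W] (hT : T.IsTree) {z z' : W} (hzz' : T.Adj z z')
    (hz : z ∈ leafSet T) : (T.induce {z}ᶜ).IsTree := by
  have := Fintype.ofFinite W
  classical
  refine ⟨hT.connected.induce_compl_singleton_of_degree_eq_one ?_, hT.isAcyclic.induce _⟩
  exact degree_eq_one_iff_existsUnique_adj.2 ⟨z', hzz', fun w hw => hz hw hzz'⟩

/-- If the neighbour of a leaf has degree at least three, deleting the leaf saves a leaf. -/
lemma hasSpanningKEnded_induce_of_branch [Finite W] (hTK : T ≤ K) (hT : T.IsTree) {k : ℕ}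
    (hleaf : (leafSet T).ncard ≤ k + 1) {z z' u w : W} (hzz' : T.Adj z z') (hz : z ∈ leafSet T)
    (hu : T.Adj z' u) (hw : T.Adj z' w) (huz : u ≠ z) (hwz : w ≠ z) (huw : u ≠ w) :
    HasSpanningKEnded (K.induce {z}ᶜ) k := by
  refine Or.inl ⟨T.induce {z}ᶜ, fun _ _ h => hTK h, isTree_induce_compl hT hzz' hz, ?_⟩
  have hsub : (↑) '' leafSet (T.induce {z}ᶜ) ⊆ leafSet T \ {z} := by
    intro v hv
    refine (image_leafSet_induce_compl_subset hzz' hz hv).resolve_left ?_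
    rintro rfl
    obtain ⟨⟨v, hvz⟩, hv, rfl⟩ := hv
    exact huw (congrArg Subtype.val (mem_leafSet_iff.1 hv ⟨u, huz⟩ ⟨w, hwz⟩ hu hw))
  have h1 := Set.ncard_le_ncard hsub (Set.toFinite _)
  rw [Set.ncard_image_of_injective _ Subtype.val_injective] at h1
  have h2 := Set.ncard_sdiff_singleton_add_one hz (Set.toFinite _)
  omega

/-- If the degree-two neighbour of a leaf `z` is adjacent in `K` to another leaf, deleting `z`
saves a leaf. -/
lemma hasSpanningKEnded_induce_of_adj [Finite W] (hTK : T ≤ K) (hT : T.IsTree) {k : ℕ}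
    (hleaf : (leafSet T).ncard ≤ k + 1) {x y z z' : W} (hzz' : T.Adj z z') (hz : z ∈ leafSet T)
    (hy : y ∈ leafSet T) (hyz : y ≠ z) (hxy : x ≠ y) (hxz : x ≠ z) (hxz' : x ≠ z')
    (hz' : ∀ u w, T.Adj z' u → T.Adj z' w → u ≠ z → w ≠ z → u = w) (hadj : K.Adj y z') :
    HasSpanningKEnded (K.induce {z}ᶜ) k := by
  have h1 := Set.ncard_le_ncard (image_leafSet_induce_compl_subset hzz' hz) (Set.toFinite _)
  rw [Set.ncard_image_of_injective _ Subtype.val_injective] at h1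
  have h2 := Set.ncard_sdiff_singleton_add_one hz (Set.toFinite _)
  have h3 := Set.ncard_insert_le z' (leafSet T \ {z})
  refine hasSpanningKEnded_of_adj_leaves (T := T.induce {z}ᶜ) (fun _ _ h => hTK h)
    (isTree_induce_compl hT hzz' hz) (by omega) (a := ⟨y, hyz⟩) (b := ⟨z', hzz'.ne'⟩)
    (c := ⟨x, hxz⟩) ?_ ?_ (fun h => hxy (congrArg Subtype.val h))
    (fun h => hxz' (congrArg Subtype.val h)) hadj
  · exact mem_leafSet_iff.2 fun u w hu hw => Subtype.ext (hy hu hw)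
  · exact mem_leafSet_iff.2 fun u w hu hw => Subtype.ext (hz' u w hu hw u.2 w.2)

lemma exists_adj_dist_add_one (hT : T.Connected) {x u : W} (hu : u ≠ x) :
    ∃ v, T.Adj u v ∧ T.dist v x + 1 = T.dist u x := by
  obtain ⟨P, hP⟩ := hT.exists_walk_length_eq_dist u x
  cases P with
  | nil => exact absurd rfl hu
  | @cons _ v _ h q =>
    refine ⟨v, h, ?_⟩
    have h1 := T.dist_le q
    obtain ⟨q', hq'⟩ := hT.exists_walk_length_eq_dist v x
    have h2 := T.dist_le (Walk.cons h q')
    simp only [Walk.length_cons] at hP h2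
    omega

/-- Rerouting a leaf `x` along a non-tree edge `xu`, where `v` is the neighbour of `u` towards
`x`: either a leaf is saved, or `v` has degree two and is not adjacent in `K` to another leaf. -/
lemma hasSpanningKEnded_of_reroute [Finite W] (hTK : T ≤ K) (hT : T.IsTree) {k : ℕ}
    (hleaf : (leafSet T).ncard ≤ k + 1) {x y u v : W} (hx : x ∈ leafSet T) (hy : y ∈ leafSet T)
    (hxy : x ≠ y) (hu : u ∉ leafSet T) (hv : v ∉ leafSet T) (hxu : K.Adj x u)
    (hnxu : ¬ T.Adj x u) (huv : T.Adj u v)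
    (hdist : T.dist v x + 1 = T.dist u x)
    (h : K.Adj v y ∨ ∃ s t, T.Adj v s ∧ T.Adj v t ∧ s ≠ u ∧ t ≠ u ∧ s ≠ t) :
    HasSpanningKEnded K k := by
  obtain ⟨q, hq⟩ := hT.connected.exists_walk_length_eq_dist v x
  have hP : (Walk.cons huv q).IsPath :=
    Walk.isPath_of_length_eq_dist _ (by rw [Walk.length_cons, hq, hdist])
  have htree : (swapEdge T x u u v).IsTree :=
    isTree_swapEdge hT _ hP.reverse hxu.ne hnxu (by simp)
  have hle : swapEdge T x u u v ≤ K := swapEdge_le hTK hxu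
  have hvx : v ≠ x := fun h => hv (h ▸ hx)
  have hadj : ∀ {a b}, T.Adj a b → ¬ (a = u ∧ b = v ∨ a = v ∧ b = u) →
      (swapEdge T x u u v).Adj a b := fun h h' => (swapEdge_adj hxu.ne).2 ⟨Or.inl h, h'⟩
  have hsub : leafSet (swapEdge T x u u v) ⊆ insert v (leafSet T \ {x}) := by
    intro w hw
    rcases leafSet_swapEdge_subset hT.connected hxu.ne hnxu hw with h | rfl | rfl
    · exact Or.inr ⟨h.1, fun h' => h.2 (Or.inl h')⟩
    · exfalso
      refine hu (mem_leafSet_iff.2 ?_)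
      by_contra! hcon
      obtain ⟨s, t, hs, ht, hst⟩ := hcon
      obtain ⟨r, hr, hrv⟩ : ∃ r, T.Adj w r ∧ r ≠ v := by
        by_cases hsv : s = v
        · exact ⟨t, ht, fun h => hst (hsv.trans h.symm)⟩
        · exact ⟨s, hs, hsv⟩
      have h1 := eq_of_mem_leafSet hw (hadj hr (by grind)) (w := x)
        ((swapEdge_adj hxu.ne).2 ⟨by simp, by grind⟩)
      exact hnxu (h1 ▸ hr.symm)
    · exact Or.inl rfl
  have h2 := Set.ncard_sdiff_singleton_add_one hx (Set.toFinite _)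
  by_cases hbranch : ∃ s t, T.Adj v s ∧ T.Adj v t ∧ s ≠ u ∧ t ≠ u ∧ s ≠ t
  · obtain ⟨s, t, hs, ht, hsu, htu, hst⟩ := hbranch
    refine Or.inl ⟨_, hle, htree, ?_⟩
    have hsub' : leafSet (swapEdge T x u u v) ⊆ leafSet T \ {x} := by
      intro w hw
      refine (hsub hw).resolve_left ?_
      rintro rfl
      exact hst (eq_of_mem_leafSet hw (hadj hs (by grind)) (hadj ht (by grind)))
    have h1 := Set.ncard_le_ncard hsub' (Set.toFinite _)
    omega
  · have hvy := h.resolve_right hbranch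
    have h1 := Set.ncard_le_ncard hsub (Set.toFinite _)
    have h3 := Set.ncard_insert_le v (leafSet T \ {x})
    have hyu : y ≠ u := fun h => hu (h ▸ hy)
    refine hasSpanningKEnded_of_adj_leaves hle htree (by omega) (a := v) (b := y) (c := x)
      (mem_leafSet_iff.2 fun s t hs ht => ?_) (mem_leafSet_iff.2 fun s t hs ht => ?_)
      hvx.symm hxy hvy
    · rw [swapEdge_adj hxu.ne] at hs ht
      by_contra hst
      exact hbranch ⟨s, t, by grind, by grind, by grind, by grind, hst⟩
    · rw [swapEdge_adj hxu.ne] at hs ht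
      exact eq_of_mem_leafSet hy (by grind) (by grind)

/-- A tree with at most `k + 1` leaves either yields a spanning structure with fewer leaves,
possibly after removing one vertex, or has two nonadjacent leaves of small degree sum. -/
theorem hasSpanningKEnded_or_exists_leaves [Finite W] (hTK : T ≤ K) (hT : T.IsTree) {k : ℕ}
    (hk : 1 ≤ k) (hleaf : (leafSet T).ncard ≤ k + 1) (hcard : 3 ≤ Nat.card W) :
    HasSpanningKEnded K k ∨ (∃ z, HasSpanningKEnded (K.induce {z}ᶜ) k) ∨
      ∃ x ∈ leafSet T, ∃ y ∈ leafSet T, x ≠ y ∧ ¬ K.Adj x y ∧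
        (K.neighborSet x).ncard + (K.neighborSet y).ncard + 2 * k ≤ Nat.card W + 1 := by
  by_contra! hcon
  obtain ⟨hK, hKz, hdeg⟩ := hcon
  have hleaf' : (leafSet T).ncard = k + 1 := by
    by_contra h
    exact hK (Or.inl ⟨T, hTK, hT, by omega⟩)
  have hthird : ∀ a b : W, ∃ c, c ≠ a ∧ c ≠ b := fun a b => by
    by_contra! h
    have h1 : (Set.univ : Set W) ⊆ {a, b} := fun c _ => by
      by_cases hca : c = a
      · exact Or.inl hca
      · exact Or.inr (h c hca)
    have h2 := Set.ncard_le_ncard h1 (Set.toFinite _)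
    have h3 := Set.ncard_insert_le a {b}
    rw [Set.ncard_univ] at h2
    simp at h3
    omega
  have hind : ∀ a ∈ leafSet T, ∀ b ∈ leafSet T, ¬ K.Adj a b := fun a ha b hb hab => by
    obtain ⟨c, hca, hcb⟩ := hthird a b
    exact hK (hasSpanningKEnded_of_adj_leaves hTK hT hleaf ha hb hca hcb hab)
  obtain ⟨x, hx, y, hy, hxy⟩ := (Set.one_lt_ncard (Set.toFinite (leafSet T))).1 (by omega)
  have hpar : ∀ u, ∃ v, u ≠ x → T.Adj u v ∧ T.dist v x + 1 = T.dist u x := fun u => by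
    by_cases hu : u = x
    · exact ⟨u, fun h => absurd hu h⟩
    · obtain ⟨v, hv⟩ := exists_adj_dist_add_one hT.connected hu
      exact ⟨v, fun _ => hv⟩
  choose p hp using hpar
  have hpp : ∀ u, u ≠ x → p u ≠ x → p (p u) ≠ u := fun u hu hpu h => by
    have h1 := (hp u hu).2
    have h2 := (hp _ hpu).2
    rw [h] at h2
    omega
  have hpleaf : ∀ u, u ≠ x → p u ≠ x → p u ∉ leafSet T := fun u hu hpu =>
    notMem_leafSet (hp _ hpu).1 (hp u hu).1.symm (hpp u hu hpu)
  set L : Set W := leafSet T \ {x, y} with hL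
  set M : Set W := K.neighborSet x ∪ L
  have hMx : ∀ u ∈ M, u ≠ x := by
    rintro u (h | h) rfl
    · exact h.ne rfl
    · exact h.2 (Or.inl rfl)
  have hLx : ∀ z ∈ L, p z ≠ x := fun z hz h =>
    hind z hz.1 x hx (hTK (h ▸ (hp z (hMx z (Or.inr hz))).1))
  have hNT : ∀ u ∈ K.neighborSet x, p u ≠ x → ¬ T.Adj x u := fun u hu hpu h => by
    have h1 := (hp u (hMx u (Or.inl hu))).2
    rw [dist_eq_one_iff_adj.2 h.symm] at h1
    exact hpu (hT.connected.dist_eq_zero_iff.1 (by omega))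
  have hprop : ∀ u ∈ M, p u ≠ x → ¬ K.Adj (p u) y ∧
      ∀ s t, T.Adj (p u) s → T.Adj (p u) t → s ≠ u → t ≠ u → s = t := by
    intro u huM hpu
    have hux := hMx u huM
    have huL := hpleaf u hux hpu
    by_contra! hcon
    have hb : (∃ s t, T.Adj (p u) s ∧ T.Adj (p u) t ∧ s ≠ u ∧ t ≠ u ∧ s ≠ t) ∨
      (K.Adj (p u) y ∧ ∀ s t, T.Adj (p u) s → T.Adj (p u) t → s ≠ u → t ≠ u → s = t) := by
      grind
    rcases huM with hu | hu
    · refine hK (hasSpanningKEnded_of_reroute hTK hT hleaf hx hy hxy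
        (fun h => hind x hx u h hu) huL hu (hNT u hu hpu) (hp u hux).1 (hp u hux).2 ?_)
      rcases hb with h | h
      · exact Or.inr h
      · exact Or.inl h.1
    · rcases hb with ⟨s, t, hs, ht, hsu, htu, hst⟩ | ⟨h1, h2⟩
      · exact hKz u (hasSpanningKEnded_induce_of_branch hTK hT hleaf (hp u hux).1 hu.1
          hs ht hsu htu hst)
      · exact hKz u (hasSpanningKEnded_induce_of_adj hTK hT hleaf (hp u hux).1 hu.1 hy
          (fun h => hu.2 (Or.inr h.symm)) hxy hux.symm hpu.symm h2 h1.symm)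
  have hinj : Set.InjOn p M := by
    intro u hu w hw huw
    have h1 := hp u (hMx u hu)
    have h2 := hp w (hMx w hw)
    by_cases hpu : p u = x
    · rw [← huw, hpu] at h2
      rw [hpu] at h1
      exact hx h1.1.symm h2.1.symm
    · by_contra hne
      have h3 := hp _ hpu
      refine hpp w (hMx w hw) (huw ▸ hpu) ?_
      rw [← huw] at h2 ⊢
      exact (hprop u hu hpu).2 _ _ h3.1 h2.1.symm (hpp u (hMx u hu) hpu) (Ne.symm hne)
  have hLy : y ∉ L := fun h => h.2 (Or.inr rfl)
  have hd1 : Disjoint (K.neighborSet x) L :=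
    Set.disjoint_left.2 fun u hu huL => hind x hx u huL.1 hu
  have hd2 : Disjoint (K.neighborSet y) (insert y L) := by
    refine Set.disjoint_left.2 fun u hu huL => ?_
    rcases huL with rfl | huL
    · exact hu.ne rfl
    · exact hind y hy u huL.1 hu
  have hd3 : Disjoint (p '' M) (K.neighborSet y ∪ insert y L) := by
    refine Set.disjoint_left.2 ?_
    rintro _ ⟨u, hu, rfl⟩ h
    by_cases hpu : p u = x
    · rw [hpu] at h
      rcases h with h | h | h
      · exact hind y hy x hx h
      · exact hxy h
      · exact h.2 (Or.inl rfl)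
    · rcases h with h | h | h
      · exact (hprop u hu hpu).1 h.symm
      · exact hpleaf u (hMx u hu) hpu (h ▸ hy)
      · exact hpleaf u (hMx u hu) hpu h.1
  have hc1 : (p '' M ∪ (K.neighborSet y ∪ insert y L)).ncard ≤ Nat.card W :=
    Set.ncard_le_card _
  rw [Set.ncard_union_eq hd3 (Set.toFinite _) (Set.toFinite _), hinj.ncard_image,
    Set.ncard_union_eq hd2 (Set.toFinite _) (Set.toFinite _),
    Set.ncard_union_eq hd1 (Set.toFinite _) (Set.toFinite _),
    Set.ncard_insert_of_notMem hLy (Set.toFinite _)] at hc1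
  have hc2 := Set.ncard_sdiff_add_ncard_of_subset (s := {x, y}) (t := leafSet T)
    (by rintro v (rfl | rfl) <;> assumption)
  rw [Set.ncard_pair hxy, ← hL] at hc2
  have := hdeg x hx y hy hxy (hind x hx y hy)
  omega

end LeafSet

section AddLeaf

variable {W : Type*} {T : SimpleGraph W}

/-- Attach a new vertex `none` to the vertex `x`. -/
def addLeaf (T : SimpleGraph W) (x : W) : SimpleGraph (Option W) :=
  T.map Function.Embedding.some ⊔ edge (some x) none

lemma addLeaf_adj_some_some {x u v : W} : (addLeaf T x).Adj (some u) (some v) ↔ T.Adj u v := by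
  rw [addLeaf, sup_adj, map_adj]
  simp [edge_adj]

lemma addLeaf_adj_some_none {x u : W} : (addLeaf T x).Adj (some u) none ↔ u = x := by
  rw [addLeaf, sup_adj, map_adj]
  simp [edge_adj]

lemma isTree_addLeaf [Finite W] (hT : T.IsTree) (x : W) : (addLeaf T x).IsTree := by
  rw [isTree_iff_connected_and_card] at hT ⊢
  constructor
  · rw [connected_iff_exists_forall_reachable]
    refine ⟨some x, fun v => ?_⟩
    cases v with
    | none => exact (addLeaf_adj_some_none.2 rfl).reachable
    | some v =>
      exact (hT.1 x v).map (⟨some, fun h => addLeaf_adj_some_some.2 h⟩ : T →g addLeaf T x)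
  · have hset : (addLeaf T x).edgeSet =
        insert s(some x, none) (Sym2.map some '' T.edgeSet) := by
      ext e
      induction e with | h u v
      rw [mem_edgeSet]
      simp only [addLeaf, sup_adj, map_adj, edge_adj, Set.mem_insert_iff, Set.mem_image]
      constructor
      · rintro (⟨a, b, h, rfl, rfl⟩ | ⟨⟨rfl, rfl⟩ | ⟨rfl, rfl⟩, -⟩)
        · exact Or.inr ⟨s(a, b), h, rfl⟩
        · exact Or.inl rfl
        · exact Or.inl Sym2.eq_swap
      · rintro (h | ⟨e, he, h⟩)
        · right
          rw [Sym2.eq_iff] at h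
          rcases h with ⟨rfl, rfl⟩ | ⟨rfl, rfl⟩ <;> simp
        · left
          induction e with | h a b
          rw [Sym2.map_mk, Sym2.eq_iff] at h
          rcases h with ⟨rfl, rfl⟩ | ⟨rfl, rfl⟩
          · exact ⟨a, b, he, rfl, rfl⟩
          · exact ⟨b, a, Adj.symm he, rfl, rfl⟩
    have hnot : s(some x, none) ∉ Sym2.map some '' T.edgeSet := by
      rintro ⟨e, -, h⟩
      induction e with | h a b
      simp at h
    rw [Nat.card_coe_set_eq, hset, Set.ncard_insert_of_notMem hnot (Set.toFinite _),
      Set.ncard_image_of_injective _ (Sym2.map.injective (Option.some_injective _)),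
      Finite.card_option, ← hT.2, Nat.card_coe_set_eq]

lemma ncard_leafSet_addLeaf_le [Finite W] (hT : T.Connected) {x y : W} (hx : x ∈ leafSet T)
    (hxy : x ≠ y) : (leafSet (addLeaf T x)).ncard ≤ (leafSet T).ncard := by
  have hsub : leafSet (addLeaf T x) ⊆ insert none (some '' (leafSet T \ {x})) := by
    intro v hv
    cases v with
    | none => exact Or.inl rfl
    | some v =>
      refine Or.inr ⟨v, ⟨mem_leafSet_iff.2 fun u w hu hw => ?_, ?_⟩, rfl⟩
      · exact Option.some_injective _ (eq_of_mem_leafSet hv (addLeaf_adj_some_some.2 hu)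
          (addLeaf_adj_some_some.2 hw))
      · rintro rfl
        obtain ⟨w, hw⟩ := exists_adj_of_ne hT hxy
        exact absurd (eq_of_mem_leafSet hv (addLeaf_adj_some_some.2 hw)
          (addLeaf_adj_some_none.2 rfl)) (by simp)
  have h1 := Set.ncard_le_ncard hsub (Set.toFinite _)
  have h2 := Set.ncard_insert_le none (some '' (leafSet T \ {x}))
  rw [Set.ncard_image_of_injective _ (Option.some_injective _)] at h2
  have h3 := Set.ncard_sdiff_singleton_add_one hx (Set.toFinite _)
  omega

end AddLeaf

section MaxOrder

variable {W : Type*} {G : SimpleGraph V} {k : ℕ}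

lemma bddAbove_order_kEndedTree [Finite V] (G : SimpleGraph V) (k : ℕ) :
    BddAbove {n | ∃ H : G.Subgraph, IsKEndedTree G k H ∧ H.verts.ncard = n} := by
  refine ⟨Nat.card V, ?_⟩
  rintro _ ⟨H, -, rfl⟩
  exact Set.ncard_le_card _

lemma IsKEndedTree.ncard_verts_le [Finite V] {H : G.Subgraph} (hH : IsKEndedTree G k H) :
    H.verts.ncard ≤ maxKEndedOrder G k :=
  le_csSup (bddAbove_order_kEndedTree G k) ⟨H, hH, rfl⟩

lemma exists_isKEndedTree_ncard_eq [Finite V] [Nonempty V] (G : SimpleGraph V) (hk : 1 ≤ k) :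
    ∃ H : G.Subgraph, IsKEndedTree G k H ∧ H.verts.ncard = maxKEndedOrder G k := by
  have hne : {n | ∃ H : G.Subgraph, IsKEndedTree G k H ∧ H.verts.ncard = n}.Nonempty :=
    ⟨_, G.singletonSubgraph (Classical.arbitrary V),
      Or.inr ⟨hk, Subgraph.singletonSubgraph_connected, Or.inl (by simp)⟩, rfl⟩
  exact Nat.sSup_mem hne (bddAbove_order_kEndedTree G k)

/-- The copy in `G` of a graph `T` on `W` embedded by `f`. -/
def embeddedSubgraph (T : SimpleGraph W) (f : W ↪ V) (hT : T ≤ G.comap f) : G.Subgraph where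
  verts := Set.range f
  Adj := (T.map f).Adj
  adj_sub := by
    intro u v h
    obtain ⟨a, b, hab, rfl, rfl⟩ := (map_adj _ _ _ _).1 h
    exact hT hab
  edge_vert := by
    intro u v h
    obtain ⟨a, b, hab, rfl, rfl⟩ := (map_adj _ _ _ _).1 h
    exact ⟨a, rfl⟩
  symm := (T.map f).symm

lemma isTree_coe_embeddedSubgraph {T : SimpleGraph W} (f : W ↪ V) (hT : T ≤ G.comap f)
    (htree : T.IsTree) : (embeddedSubgraph T f hT).coe.IsTree := by
  let e : T ≃g (embeddedSubgraph T f hT).coe :=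
    { toEquiv := Equiv.ofInjective f f.injective
      map_rel_iff' := map_adj_apply (f := f) }
  exact e.isTree_iff.1 htree

lemma endVertexCount_embeddedSubgraph_le [Finite W] {T : SimpleGraph W} (f : W ↪ V)
    (hT : T ≤ G.comap f) :
    endVertexCount (embeddedSubgraph T f hT) ≤ (leafSet T).ncard := by
  rw [← Set.ncard_image_of_injective _ f.injective]
  refine Set.ncard_le_ncard ?_ (Set.toFinite _)
  rintro _ ⟨⟨a, rfl⟩, ha⟩
  obtain ⟨w, hw⟩ := Set.ncard_eq_one.1 ha
  have hmem : ∀ u, T.Adj a u → f u = w := fun u hu => by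
    have : f u ∈ (embeddedSubgraph T f hT).neighborSet (f a) := map_adj_apply.2 hu
    rwa [hw] at this
  exact ⟨a, mem_leafSet_iff.2 fun u v hu hv =>
    f.injective ((hmem u hu).trans (hmem v hv).symm), rfl⟩

lemma HasSpanningKEnded.card_le_maxKEndedOrder [Finite V] [Finite W] (hk : 1 ≤ k) (f : W ↪ V)
    (h : HasSpanningKEnded (G.comap f) k) : Nat.card W ≤ maxKEndedOrder G k := by
  rcases h with ⟨T, hTG, hT, hleaf⟩ | ⟨a, c, hc, hall⟩
  · have hH : IsKEndedTree G k (embeddedSubgraph T f hTG) :=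
      Or.inl ⟨isTree_coe_embeddedSubgraph f hTG hT,
        (endVertexCount_embeddedSubgraph_le f hTG).trans hleaf⟩
    refine le_trans (le_of_eq ?_) hH.ncard_verts_le
    exact (Set.ncard_range_of_injective f.injective).symm
  · let φ : G.comap f →g G := ⟨f, fun h => h⟩
    have hc' : (c.map φ).IsCycle := hc.map f.injective
    have hH : IsKEndedTree G k (c.map φ).toSubgraph := by
      refine Or.inr ⟨hk, (c.map φ).toSubgraph_connected, Or.inr fun v hv => ?_⟩
      exact hc'.ncard_neighborSet_toSubgraph_eq_two ((Walk.mem_verts_toSubgraph _).1 hv)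
    refine le_trans ?_ hH.ncard_verts_le
    rw [← Set.ncard_range_of_injective f.injective]
    refine Set.ncard_le_ncard ?_ (Set.toFinite _)
    rintro _ ⟨w, rfl⟩
    rw [Walk.mem_verts_toSubgraph, Walk.support_map]
    exact List.mem_map_of_mem (hall w)

/-- In a largest embedded `k`-ended tree all neighbours of a leaf belong to the tree. -/
lemma neighborSet_subset_range [Finite V] [Finite W] (hk : 1 ≤ k) (f : W ↪ V)
    {T : SimpleGraph W} (hTG : T ≤ G.comap f) (hT : T.IsTree) (hleaf : (leafSet T).ncard ≤ k)
    (hmax : maxKEndedOrder G k ≤ Nat.card W) {x y : W} (hx : x ∈ leafSet T) (hxy : x ≠ y) :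
    G.neighborSet (f x) ⊆ Set.range f := by
  intro v hv
  by_contra hvf
  let g : Option W ↪ V := Function.Embedding.optionElim f v hvf
  have hle : addLeaf T x ≤ G.comap g := by
    intro a b hab
    cases a with
    | none =>
      cases b with
      | none => exact absurd rfl hab.ne
      | some b =>
        obtain rfl := addLeaf_adj_some_none.1 hab.symm
        exact Adj.symm hv
    | some a =>
      cases b with
      | none =>
        obtain rfl := addLeaf_adj_some_none.1 hab
        exact hv
      | some b => exact hTG (addLeaf_adj_some_some.1 hab)
  have h1 : HasSpanningKEnded (G.comap g) k := Or.inl ⟨addLeaf T x, hle, isTree_addLeaf hT x,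
    (ncard_leafSet_addLeaf_le hT.connected hx hxy).trans hleaf⟩
  have h2 := h1.card_le_maxKEndedOrder hk g
  rw [Finite.card_option] at h2
  omega

lemma ncard_neighborSet_comap [Fintype V] [DecidableRel G.Adj] (f : W ↪ V) {x : W}
    (h : G.neighborSet (f x) ⊆ Set.range f) :
    ((G.comap f).neighborSet x).ncard = G.degree (f x) := by
  rw [← Set.ncard_image_of_injective _ f.injective, ← card_neighborSet_eq_degree,
    ← Nat.card_eq_fintype_card, Nat.card_coe_set_eq]
  congr 1
  ext v
  constructor
  · rintro ⟨w, hw, rfl⟩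
    exact hw
  · intro hv
    obtain ⟨w, rfl⟩ := h hv
    exact ⟨w, hv, rfl⟩

lemma minDegreeSum_two_le [Fintype V] [DecidableRel G.Adj] {x y : V} (hxy : x ≠ y)
    (hadj : ¬ G.Adj x y) : minDegreeSum G 2 ≤ (G.degree x + G.degree y : ℕ) := by
  classical
  have hind : IsIndSet G (({x, y} : Finset V) : Set V) := by
    intro u hu v hv
    simp only [Finset.coe_insert, Finset.coe_singleton, Set.mem_insert_iff,
      Set.mem_singleton_iff] at hu hv
    rcases hu with rfl | rfl <;> rcases hv with rfl | rfl
    · exact G.irrefl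
    · exact hadj
    · exact fun h => hadj h.symm
    · exact G.irrefl
  refine (iInf₂_le ({x, y} : Finset V) ⟨Finset.card_pair hxy, hind⟩).trans ?_
  rw [Finset.sum_pair hxy]
  push_cast
  exact le_rfl

lemma ncard_leafSet_coe_le [Finite V] {H : G.Subgraph} (hH : H.coe.Connected)
    (hcard : 2 ≤ H.verts.ncard) : (leafSet H.coe).ncard ≤ endVertexCount H := by
  rw [← Set.ncard_image_of_injective _ Subtype.val_injective]
  refine Set.ncard_le_ncard ?_ (Set.toFinite _)
  rintro _ ⟨v, hv, rfl⟩
  obtain ⟨u, hu, huv⟩ := Set.exists_ne_of_one_lt_ncard hcard v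
  obtain ⟨w, hw⟩ := exists_adj_of_ne hH (a := v) (b := ⟨u, hu⟩)
    (fun h => huv (congrArg Subtype.val h).symm)
  refine ⟨v.2, Set.ncard_eq_one.2 ⟨w, ?_⟩⟩
  ext s
  constructor
  · intro hs
    exact congrArg Subtype.val (eq_of_mem_leafSet hv
      (show H.coe.Adj v ⟨s, H.edge_vert (H.symm.symm _ _ hs)⟩ from hs) hw)
  · rintro rfl
    exact hw

end MaxOrder

/-- **Corollary 8.** If `G` is connected and `σ_2 ≥ t_{k+1} - 2k + 2` for some
positive integer `k`, then `t_k ≥ t_{k+1} - 1`. -/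
theorem corollary8 [Fintype V] (G : SimpleGraph V) [DecidableRel G.Adj]
    (hG : G.Connected) (k : ℕ) (hk : 1 ≤ k)
    (h : (maxKEndedOrder G (k + 1) : ℕ∞) + 2 ≤
      minDegreeSum G 2 + ((2 * k : ℕ) : ℕ∞)) :
    maxKEndedOrder G k + 1 ≥ maxKEndedOrder G (k + 1) := by
  have hne : Nonempty V := hG.nonempty
  obtain ⟨H, hH, hcard⟩ := exists_isKEndedTree_ncard_eq G (k := k + 1) (by omega)
  rcases hH with ⟨hT, hend⟩ | ⟨-, hcyc⟩
  swap
  · have h1 := IsKEndedTree.ncard_verts_le (G := G) (k := k) (Or.inr ⟨hk, hcyc⟩)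
    omega
  by_cases hsmall : H.verts.ncard ≤ 2
  · have h1 := IsKEndedTree.ncard_verts_le (G := G) (k := k)
      (Or.inr ⟨hk, ⟨hT.connected⟩, Or.inl hsmall⟩)
    omega
  let f : H.verts ↪ V := Function.Embedding.subtype _
  have hTG : H.coe ≤ G.comap f := fun _ _ h => H.adj_sub h
  have hleaf := (ncard_leafSet_coe_le hT.connected (by omega)).trans hend
  have hcardW : Nat.card H.verts = maxKEndedOrder G (k + 1) := by
    rw [Nat.card_coe_set_eq, hcard]
  rcases hasSpanningKEnded_or_exists_leaves hTG hT hk hleaf (by omega) with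
    hs | ⟨z, hs⟩ | ⟨x, hx, y, hy, hxy, hadj, hdeg⟩
  · have h1 := hs.card_le_maxKEndedOrder hk f
    omega
  · have h1 := HasSpanningKEnded.card_le_maxKEndedOrder (G := G) hk
      ((Function.Embedding.subtype (· ∈ ({z}ᶜ : Set H.verts))).trans f) hs
    have h2 := Set.ncard_add_ncard_compl {z}
    rw [Set.ncard_singleton] at h2
    change Nat.card ({z}ᶜ : Set H.verts) ≤ _ at h1
    rw [Nat.card_coe_set_eq] at h1
    omega
  · rw [ncard_neighborSet_comap f
        (neighborSet_subset_range (by omega) f hTG hT hleaf hcardW.ge hx hxy),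
      ncard_neighborSet_comap f
        (neighborSet_subset_range (by omega) f hTG hT hleaf hcardW.ge hy hxy.symm)] at hdeg
    have h1 := h.trans (add_le_add_left (minDegreeSum_two_le (f.injective.ne hxy) hadj) _)
    norm_cast at h1
    omega
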